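/- Fix N ≥ 1 and, for i = 1,…,N, set f_i(p) = r_{i,1}·p + r_{i,2}. Let μ : ℝ → ℝ be continuously differentiable, λ₁, λ₂ > 0, q_max ∈ ℝ, and let p, ν : [0,∞) → ℝ be continuous, K : [0,∞) → ℝ, and d : [0,∞) → ℝ be the observed aggregate dropout. For z > 0 define the consistent-composition set W(z, d, p) = { w ∈ ℝᴺ : w ≥ 0, Σᵢ wᵢ = 1, z·Σᵢ f_i(p)·wᵢ = d }. Let w* : [0,∞) → ℝᴺ be the true (unobservable) composition, and suppose (q, z, α) : [0,∞) → ℝ³ is a differentiable solution of q̇ = αz − μ(q), ż = K(t) − z·Σᵢ f_i(p(t))·w*ᵢ(t) − αz, α̇ = ν(t). Define, for a composition w, η₁(t, w) = (α(t)z(t) − μ(q(t)))·μ'(q(t)) − α(t)·(K(t) − z(t)(wᵀr₂) − α(t)z(t)) + α(t)z(t)(wᵀr₁)·p(t) − z(t)·ν(t) + λ₁·(μ(q(t)) − α(t)z(t)) + λ₂·(μ(q(t)) − α(t)z(t) + λ₁(q_max − q(t))). Assume that for all t ≥ 0: (i) w*(t) ∈ W(z(t), d(t), p(t)); (ii) the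 worst-case margin satisfies inf_{w ∈ W(z(t), d(t), p(t))} η₁(t, w) ≥ 0; (iii) q(0) ≤ q_max and μ(q(0)) − α(0)z(0) + λ₁(q_max − q(0)) ≥ 0. Then q(t) ≤ q_max for all t ≥ 0. -/

import Mathlib

open scoped BigOperators

theorem comparison_aux (g g' : ℝ → ℝ) (l : ℝ)
    (hg : ∀ t ≥ (0 : ℝ), HasDerivAt g (g' t) t)
    (h : ∀ t ≥ (0 : ℝ), 0 ≤ g' t + l * g t) (h0 : 0 ≤ g 0) :
    ∀ t ≥ (0 : ℝ), 0 ≤ g t := by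
  intro t ht
  have hd : ∀ s ≥ (0 : ℝ), HasDerivAt (fun s => Real.exp (l * s) * g s)
      (Real.exp (l * s) * (g' s + l * g s)) s := by
    intro s hs
    have h1 : HasDerivAt (fun s : ℝ => Real.exp (l * s)) (Real.exp (l * s) * (l * 1)) s :=
      ((hasDerivAt_id s).const_mul l).exp
    refine (h1.mul (hg s hs)).congr_deriv ?_
    ring
  have hm : MonotoneOn (fun s => Real.exp (l * s) * g s) (Set.Ici 0) := by
    refine monotoneOn_of_hasDerivWithinAt_nonneg
      (f' := fun s => Real.exp (l * s) * (g' s + l * g s)) (convex_Ici 0) ?_ ?_ ?_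
    · intro s hs
      exact (hd s hs).continuousAt.continuousWithinAt
    · intro s hs
      exact (hd s (interior_subset hs)).hasDerivWithinAt
    · intro s hs
      exact mul_nonneg (Real.exp_pos _).le (h s (interior_subset hs))
  have h2 := hm (Set.mem_Ici.2 le_rfl) (Set.mem_Ici.2 ht) ht
  simp only [mul_zero, Real.exp_zero, one_mul] at h2
  exact nonneg_of_mul_nonneg_right (h0.trans h2) (Real.exp_pos _)

/-- Robust queue-capacity guarantee (Proposition 1, capacity part): the controller
only knows that the true composition `w*` lies in the consistent set
`W(z, d, p) = {w ≥ 0, Σᵢ wᵢ = 1, z Σᵢ fᵢ(p) wᵢ = d}`. If the worst-case iHOCBF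
margin `inf_{w ∈ W} η₁(t, w)` is nonnegative for all `t ≥ 0`, and the initial
state satisfies `q(0) ≤ q_max` and `ψ₁(0) ≥ 0`, then `q(t) ≤ q_max` for all
`t ≥ 0`. -/
theorem robust_ihocbf_capacity_invariance
    (N : ℕ) (hN : 1 ≤ N) (r1 r2 : Fin N → ℝ)
    (f : Fin N → ℝ → ℝ) (hf : ∀ i pr, f i pr = r1 i * pr + r2 i)
    (μ : ℝ → ℝ) (hμ : ContDiff ℝ 1 μ)
    (l1 l2 : ℝ) (hl1 : 0 < l1) (hl2 : 0 < l2) (qmax : ℝ)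
    (p ν : ℝ → ℝ) (hp : Continuous p) (hν : Continuous ν)
    (K d : ℝ → ℝ)
    (W : ℝ → ℝ → ℝ → Set (Fin N → ℝ))
    (hW : ∀ zv dv pv,
      W zv dv pv =
        {w | (∀ i, 0 ≤ w i) ∧ (∑ i, w i) = 1 ∧ zv * (∑ i, f i pv * w i) = dv})
    (wstar : ℝ → Fin N → ℝ)
    (q z α : ℝ → ℝ)
    (hq : ∀ t ≥ (0 : ℝ), HasDerivAt q (α t * z t - μ (q t)) t)
    (hz : ∀ t ≥ (0 : ℝ),
      HasDerivAt z (K t - z t * (∑ i, f i (p t) * wstar t i) - α t * z t) t)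
    (hα : ∀ t ≥ (0 : ℝ), HasDerivAt α (ν t) t)
    (η₁ : ℝ → (Fin N → ℝ) → ℝ)
    (hη : ∀ t w₀,
      η₁ t w₀ =
        (α t * z t - μ (q t)) * deriv μ (q t)
          - α t * (K t - z t * (∑ i, w₀ i * r2 i) - α t * z t)
          + α t * z t * (∑ i, w₀ i * r1 i) * p t
          - z t * ν t
          + l1 * (μ (q t) - α t * z t)
          + l2 * (μ (q t) - α t * z t + l1 * (qmax - q t)))
    (hmem : ∀ t ≥ (0 : ℝ), wstar t ∈ W (z t) (d t) (p t))
    (hrobust : ∀ t ≥ (0 : ℝ), 0 ≤ sInf (η₁ t '' W (z t) (d t) (p t)))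
    (hq0 : q 0 ≤ qmax)
    (hψ0 : 0 ≤ μ (q 0) - α 0 * z 0 + l1 * (qmax - q 0)) :
    ∀ t ≥ (0 : ℝ), q t ≤ qmax := by
  have hηs : ∀ t ≥ (0 : ℝ), 0 ≤ η₁ t (wstar t) := by
    intro t ht
    refine (hrobust t ht).trans (csInf_le ?_ ⟨_, hmem t ht, rfl⟩)
    have hc : Continuous (η₁ t) := by
      have : η₁ t = _ := funext (hη t)
      rw [this]
      fun_prop
    refine ((isCompact_Icc (a := (0 : Fin N → ℝ)) (b := 1)).image hc).bddBelow.mono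
      (Set.image_mono ?_)
    rw [hW]
    rintro w ⟨h0, h1, -⟩
    refine ⟨fun i => h0 i, fun i => ?_⟩
    have := Finset.single_le_sum (f := w) (fun j _ => h0 j) (Finset.mem_univ i)
    rw [h1] at this
    exact this
  have hψ := comparison_aux (fun t => μ (q t) - α t * z t + l1 * (qmax - q t))
    (fun t => deriv μ (q t) * (α t * z t - μ (q t))
      - (ν t * z t + α t * (K t - z t * (∑ i, f i (p t) * wstar t i) - α t * z t))
      + l1 * (0 - (α t * z t - μ (q t)))) l2
    (by
      intro t ht
      have hm : HasDerivAt μ (deriv μ (q t)) (q t) :=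
        (hμ.differentiable (by norm_num) _).hasDerivAt
      exact ((hm.comp t (hq t ht)).sub ((hα t ht).mul (hz t ht))).add
        (((hasDerivAt_const t qmax).sub (hq t ht)).const_mul l1))
    (by
      intro t ht
      have h := hηs t ht
      rw [hη] at h
      have hs : ∑ i, f i (p t) * wstar t i
          = (∑ i, wstar t i * r1 i) * p t + ∑ i, wstar t i * r2 i := by
        rw [Finset.sum_mul, ← Finset.sum_add_distrib]
        refine Finset.sum_congr rfl fun i _ => ?_
        rw [hf]; ring
      simp only [hs]
      refine h.trans_eq ?_
      ring) hψ0
  have hb := comparison_aux (fun t => qmax - q t) (fun t => 0 - (α t * z t - μ (q t))) l1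
    (fun t ht => (hasDerivAt_const t qmax).sub (hq t ht))
    (fun t ht => (hψ t ht).trans_eq (by ring)) (sub_nonneg.2 hq0)
  exact fun t ht => sub_nonneg.1 (hb t ht)
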